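/- Let p = q = +∞. Let μ and ν be non-negative Borel measures on I = (a,b) ⊆ ℝ and let w, u ∈ B⁺(I). Then the best (least) constant c in the inequality ‖gw‖_{∞,(a,b),μ} ≤ c ‖u(x) ‖g‖_{∞,(x,b),μ}‖_{∞,(a,b),ν} over all g ∈ B⁺(I) not μ-a.e. equal to 0 equals exactly ‖ ‖w‖_{∞,(a,x],μ} · ‖u‖_{∞,(a,x),ν}^{−1} ‖_{∞,(a,b),μ}. -/

import Mathlib

/-!
Write `W x = ‖w‖_{∞,(a,x],μ}`, `U x = ‖u‖_{∞,(a,x),ν}`, `G x = ‖g‖_{∞,(x,b),μ}`; `U` and `W` are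
nondecreasing and `G` is nonincreasing. Let `B` be the right-hand norm of `g` and `C` the
essential supremum of `W / U`.

*Upper bound.* For `μ`-almost every `t` one has `g t ≤ G x` for all `x < t` at once
(`ae_le_eSup_Ioo_right`: by monotonicity of `G` it suffices to treat rational `x`). Hence
`g t * U t ≤ ‖u G‖_{∞,(a,t),ν} ≤ B`. Moreover `w t ≤ W t` for `μ`-almost every `t`
(`ae_le_eSup_Ioc`), and for finite `B` and `C` these give `g w ≤ C * B` almost everywhere; if `B` or
`C` is infinite, the ratio bound is trivial.

*Lower bound.* The function `g = 1 / U` is extremal. For `ν`-almost every `x`, `u x ≤ U t` for all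
`t > x` (`ae_le_eSup_Ioo_left`), so its right-hand norm is at most `1`; and since `1 / U` is
nonincreasing, `W t / U t ≤ ‖w / U‖_{∞,(a,t],μ}` for every `t`, so its left-hand norm is at
least `C`.
-/

open MeasureTheory Set ENNReal

noncomputable section

/-- The `μ`-essential supremum of `f` over `E`:
`‖f‖_{∞,E,μ} = sup {α : μ({y ∈ E : f y ≥ α}) > 0}`. -/
def eSup (μ : Measure ℝ) (E : Set ℝ) (f : ℝ → ℝ≥0∞) : ℝ≥0∞ :=
  sSup {α : ℝ≥0∞ | 0 < μ {y | y ∈ E ∧ α ≤ f y}}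

/-- `‖u(x) ‖g‖_{∞,(x,b),μ}‖_{∞,(a,b),ν}`. -/
def RHSsup (a b : ℝ) (μ ν : Measure ℝ) (u g : ℝ → ℝ≥0∞) : ℝ≥0∞ :=
  eSup ν (Ioo a b) (fun x => u x * eSup μ (Ioo x b) g)

/-- Bridge to Mathlib's essential supremum; no measurability of `f` is needed. -/
lemma eSup_eq_essSup (μ : Measure ℝ) {E : Set ℝ} (hE : MeasurableSet E) (f : ℝ → ℝ≥0∞) :
    eSup μ E f = essSup f (μ.restrict E) := by
  apply le_antisymm
  · refine sSup_le fun α hα => ?_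
    by_contra! h
    have hpos : 0 < μ {y | y ∈ E ∧ α ≤ f y} := hα
    refine hpos.ne' ?_
    have h1 : ∀ᵐ y ∂μ.restrict E, f y < α := ae_lt_of_essSup_lt h
    rw [ae_restrict_iff' hE] at h1
    refine measure_mono_null ?_ h1
    intro y hy h2
    exact absurd (h2 hy.1) (not_lt.2 hy.2)
  · refine essSup_le_of_ae_le _ ?_
    by_contra h
    -- A failure of the bound persists at some level `q` strictly above the supremum.
    have h1 : ¬ ∀ q : ℚ, ∀ᵐ y ∂μ.restrict E,
        eSup μ E f < (Real.toNNReal q : ℝ≥0∞) → f y < (Real.toNNReal q : ℝ≥0∞) := by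
      intro h2
      apply h
      filter_upwards [ae_all_iff.2 h2] with y hy
      by_contra! h3
      obtain ⟨q, -, hq1, hq2⟩ := ENNReal.lt_iff_exists_rat_btwn.1 h3
      exact absurd (hy q hq1) (not_lt.2 hq2.le)
    obtain ⟨q, hq⟩ := not_forall.1 h1
    apply hq
    by_cases hlt : eSup μ E f < (Real.toNNReal q : ℝ≥0∞)
    · rw [ae_restrict_iff' hE]
      have h0 : μ {y | y ∈ E ∧ (Real.toNNReal q : ℝ≥0∞) ≤ f y} = 0 := by
        by_contra hne
        exact absurd (le_sSup (pos_iff_ne_zero.2 hne) : _ ≤ eSup μ E f) (not_le.2 hlt)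
      refine measure_mono_null ?_ h0
      intro y hy
      have hy' : ¬ (y ∈ E → eSup μ E f < (Real.toNNReal q : ℝ≥0∞) →
        f y < (Real.toNNReal q : ℝ≥0∞)) := hy
      push Not at hy'
      exact ⟨hy'.1, hy'.2.2⟩
    · exact Filter.Eventually.of_forall fun y hy => absurd hy hlt

lemma ae_le_eSup (μ : Measure ℝ) {E : Set ℝ} (hE : MeasurableSet E) (f : ℝ → ℝ≥0∞) :
    ∀ᵐ y ∂μ, y ∈ E → f y ≤ eSup μ E f := by
  rw [eSup_eq_essSup μ hE, ← ae_restrict_iff' hE]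
  exact ENNReal.ae_le_essSup f

lemma eSup_le (μ : Measure ℝ) {E : Set ℝ} (hE : MeasurableSet E) {f : ℝ → ℝ≥0∞} {c : ℝ≥0∞}
    (h : ∀ᵐ y ∂μ, y ∈ E → f y ≤ c) : eSup μ E f ≤ c := by
  rw [eSup_eq_essSup μ hE]
  exact essSup_le_of_ae_le _ ((ae_restrict_iff' hE).2 h)

lemma eSup_const_mul (μ : Measure ℝ) {E : Set ℝ} (hE : MeasurableSet E) (f : ℝ → ℝ≥0∞)
    (c : ℝ≥0∞) : eSup μ E (fun y => c * f y) = c * eSup μ E f := by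
  rw [eSup_eq_essSup μ hE, eSup_eq_essSup μ hE]
  exact ENNReal.essSup_const_mul

lemma eSup_mono_set (μ : Measure ℝ) {E F : Set ℝ} (h : E ⊆ F) (f : ℝ → ℝ≥0∞) :
    eSup μ E f ≤ eSup μ F f :=
  sSup_le_sSup fun α hα => by
    have hpos : 0 < μ {y | y ∈ E ∧ α ≤ f y} := hα
    exact hpos.trans_le (measure_mono fun _ hy => ⟨h hy.1, hy.2⟩)

/-- The exceptional null set does not depend on `x`. -/
lemma ae_le_eSup_Ioo_right (μ : Measure ℝ) (b : ℝ) (g : ℝ → ℝ≥0∞) :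
    ∀ᵐ t ∂μ, t < b → ∀ x < t, g t ≤ eSup μ (Ioo x b) g := by
  have h : ∀ᵐ t ∂μ, ∀ r : ℚ, t ∈ Ioo (r : ℝ) b → g t ≤ eSup μ (Ioo (r : ℝ) b) g :=
    ae_all_iff.2 fun r => ae_le_eSup μ measurableSet_Ioo g
  filter_upwards [h] with t ht htb x hx
  obtain ⟨r, hr1, hr2⟩ := exists_rat_btwn hx
  exact (ht r ⟨hr2, htb⟩).trans (eSup_mono_set μ (Ioo_subset_Ioo_left hr1.le) g)

/-- The exceptional null set does not depend on `t`. -/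
lemma ae_le_eSup_Ioo_left (ν : Measure ℝ) (a : ℝ) (u : ℝ → ℝ≥0∞) :
    ∀ᵐ x ∂ν, a < x → ∀ t, x < t → u x ≤ eSup ν (Ioo a t) u := by
  have h : ∀ᵐ x ∂ν, ∀ r : ℚ, x ∈ Ioo a (r : ℝ) → u x ≤ eSup ν (Ioo a (r : ℝ)) u :=
    ae_all_iff.2 fun r => ae_le_eSup ν measurableSet_Ioo u
  filter_upwards [h] with x hx hax t ht
  obtain ⟨r, hr1, hr2⟩ := exists_rat_btwn ht
  exact (hx r ⟨hax, hr1⟩).trans (eSup_mono_set ν (Ioo_subset_Ioo_right hr2.le) u)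

/-- A set of reals all of whose closed initial segments are null is null. -/
lemma measure_null_of_initial (μ : Measure ℝ) (S : Set ℝ) (h : ∀ t ∈ S, μ (S ∩ Iic t) = 0) :
    μ S = 0 := by
  refine measure_null_of_locally_null S fun x hx => ?_
  by_cases hm : ∃ y ∈ S, x < y
  · obtain ⟨y, hy, hxy⟩ := hm
    exact ⟨S ∩ Iic y, Filter.inter_mem self_mem_nhdsWithin
      (mem_nhdsWithin_of_mem_nhds (Iic_mem_nhds hxy)), h y hy⟩
  · push Not at hm
    exact ⟨S ∩ Iic x, Filter.inter_mem self_mem_nhdsWithin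
      (Filter.mem_of_superset self_mem_nhdsWithin hm), h x hx⟩

/-- Closedness of `(a,t]` at `t` matters here: with `(a,t)` an atom of `μ` could violate the
bound. -/
lemma ae_le_eSup_Ioc (μ : Measure ℝ) (a : ℝ) (w : ℝ → ℝ≥0∞) :
    ∀ᵐ t ∂μ, a < t → w t ≤ eSup μ (Ioc a t) w := by
  have h : ∀ᵐ t ∂μ, ∀ q : ℚ, ¬ (a < t ∧ eSup μ (Ioc a t) w < (Real.toNNReal q : ℝ≥0∞) ∧
      (Real.toNNReal q : ℝ≥0∞) < w t) := by
    refine ae_all_iff.2 fun q => ?_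
    rw [ae_iff]
    simp only [not_not]
    refine measure_null_of_initial μ _ fun t ht => ?_
    refine measure_mono_null ?_ (ae_le_eSup μ (measurableSet_Ioc (a := a) (b := t)) w)
    rintro s ⟨⟨hs1, -, hs3⟩, hst⟩ hle
    exact absurd (hle ⟨hs1, hst⟩) (not_le.2 (ht.2.1.trans hs3))
  filter_upwards [h] with t ht hat
  by_contra! hlt
  obtain ⟨q, -, hq1, hq2⟩ := ENNReal.lt_iff_exists_rat_btwn.1 hlt
  exact ht q ⟨hat, hq1, hq2⟩

/-- The upper bound: every admissible ratio is at most the claimed constant. -/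
lemma ratio_le (a b : ℝ) (μ ν : Measure ℝ) (w u g : ℝ → ℝ≥0∞) :
    eSup μ (Ioo a b) (fun t => g t * w t) / RHSsup a b μ ν u g ≤
      eSup μ (Ioo a b) (fun x => eSup μ (Ioc a x) w * (eSup ν (Ioo a x) u)⁻¹) := by
  have hC := ae_le_eSup μ (measurableSet_Ioo (a := a) (b := b))
    (fun x => eSup μ (Ioc a x) w * (eSup ν (Ioo a x) u)⁻¹)
  have hB := ae_le_eSup ν (measurableSet_Ioo (a := a) (b := b))
    (fun x => u x * eSup μ (Ioo x b) g)
  change ∀ᵐ y ∂ν, y ∈ Ioo a b → _ ≤ RHSsup a b μ ν u g at hB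
  generalize RHSsup a b μ ν u g = B at *
  generalize eSup μ (Ioo a b) (fun x => eSup μ (Ioc a x) w * (eSup ν (Ioo a x) u)⁻¹) = C at *
  -- Both degenerate cases are trivial, the first because `_ / ∞ = 0`.
  rcases eq_or_ne B ∞ with rfl | hBt
  · simp
  rcases eq_or_ne C ∞ with rfl | hCt
  · simp
  refine ENNReal.div_le_of_le_mul (eSup_le μ measurableSet_Ioo ?_)
  filter_upwards [hC, ae_le_eSup_Ioo_right μ b g, ae_le_eSup_Ioc μ a w] with t h1 h2 h3 ht
  replace h1 := h1 ht
  replace h2 := h2 ht.2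
  replace h3 := h3 ht.1
  have h4 : g t * eSup ν (Ioo a t) u ≤ B := by
    rw [← eSup_const_mul ν measurableSet_Ioo]
    refine eSup_le ν measurableSet_Ioo ?_
    filter_upwards [hB] with x hx hxt
    refine le_trans ?_ (hx ⟨hxt.1, hxt.2.trans ht.2⟩)
    rw [mul_comm]
    gcongr
    exact h2 x hxt.2
  generalize eSup ν (Ioo a t) u = U at *
  generalize eSup μ (Ioc a t) w = W at *
  rcases eq_or_ne U 0 with rfl | hU0
  · -- Here `W = 0`, since otherwise `W * 0⁻¹ = ∞` would force `C = ∞`.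
    have : W = 0 := by
      by_contra hW
      simp [ENNReal.mul_top hW] at h1
      exact hCt h1
    have hw0 : w t = 0 := by simpa [this] using h3
    simp [hw0]
  rcases eq_or_ne U ∞ with rfl | hUt
  · have hg0 : g t = 0 := by
      by_contra hg
      rw [ENNReal.mul_top hg] at h4
      exact hBt (top_le_iff.1 h4)
    simp [hg0]
  calc g t * w t ≤ g t * W := by gcongr
    _ = (W * U⁻¹) * (g t * U) := by
      rw [show (W * U⁻¹) * (g t * U) = g t * W * (U⁻¹ * U) by ring,
        ENNReal.inv_mul_cancel hU0 hUt, mul_one]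
    _ ≤ C * B := by gcongr

/-- The function `1 / U` is normalised: its right-hand norm is at most `1`. -/
lemma RHSsup_inv_le_one (a b : ℝ) (μ ν : Measure ℝ) (u : ℝ → ℝ≥0∞) :
    RHSsup a b μ ν u (fun t => (eSup ν (Ioo a t) u)⁻¹) ≤ 1 := by
  refine eSup_le ν measurableSet_Ioo ?_
  filter_upwards [ae_le_eSup_Ioo_left ν a u] with x hx hxab
  rw [← eSup_const_mul μ measurableSet_Ioo]
  refine eSup_le μ measurableSet_Ioo (Filter.Eventually.of_forall fun t ht => ?_)
  exact ENNReal.div_le_of_le_mul (by simpa using hx hxab.1 t ht.1)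

/-- The left-hand norm of `1 / U` is at least the claimed constant, since `1 / U` is nonincreasing. -/
lemma le_eSup_inv_mul (a b : ℝ) (μ ν : Measure ℝ) (w u : ℝ → ℝ≥0∞) :
    eSup μ (Ioo a b) (fun x => eSup μ (Ioc a x) w * (eSup ν (Ioo a x) u)⁻¹) ≤
      eSup μ (Ioo a b) (fun t => (eSup ν (Ioo a t) u)⁻¹ * w t) := by
  refine eSup_le μ measurableSet_Ioo (Filter.Eventually.of_forall fun t ht => ?_)
  rw [mul_comm, ← eSup_const_mul μ measurableSet_Ioc]
  refine eSup_le μ measurableSet_Ioc ?_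
  filter_upwards [ae_le_eSup μ (measurableSet_Ioo (a := a) (b := b))
    (fun t => (eSup ν (Ioo a t) u)⁻¹ * w t)] with s hs hst
  refine le_trans ?_ (hs ⟨hst.1, hst.2.trans_lt ht.2⟩)
  gcongr
  exact eSup_mono_set ν (Ioo_subset_Ioo_right hst.2) u

/-- Remark 3.7, case `p = q = ∞`: the best constant in
`‖gw‖_{∞,(a,b),μ} ≤ c ‖u(x) ‖g‖_{∞,(x,b),μ}‖_{∞,(a,b),ν}` over all `g ∈ B⁺((a,b))`
not `μ`-a.e. equal to `0`, i.e. the supremum of the corresponding ratios, is exactly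
`‖ ‖w‖_{∞,(a,x],μ} ‖u‖_{∞,(a,x),ν}⁻¹ ‖_{∞,(a,b),μ}`. -/
theorem statement17 (a b : ℝ) (hab : a < b)
    (μ ν : Measure ℝ) (w u : ℝ → ℝ≥0∞) (hw : Measurable w) (hu : Measurable u) :
    sSup {z : ℝ≥0∞ | ∃ g : ℝ → ℝ≥0∞, Measurable g ∧
        ¬ (∀ᵐ t ∂μ.restrict (Ioo a b), g t = 0) ∧
        z = eSup μ (Ioo a b) (fun t => g t * w t) / RHSsup a b μ ν u g} =
      eSup μ (Ioo a b) (fun x => eSup μ (Ioc a x) w * (eSup ν (Ioo a x) u)⁻¹) := by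
  apply le_antisymm
  · refine sSup_le ?_
    rintro z ⟨g, -, -, rfl⟩
    exact ratio_le a b μ ν w u g
  · have hmain := le_eSup_inv_mul a b μ ν w u
    have hone := RHSsup_inv_le_one a b μ ν u
    by_cases h0 : ∀ᵐ t ∂μ.restrict (Ioo a b), (eSup ν (Ioo a t) u)⁻¹ = 0
    · -- `1 / U` is not admissible, but then the claimed constant is `0`.
      rw [ae_restrict_iff' measurableSet_Ioo] at h0
      refine (hmain.trans (eSup_le μ measurableSet_Ioo (c := 0) ?_)).trans zero_le
      filter_upwards [h0] with t ht htab
      simp [ht htab]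
    · have hmono : Monotone fun t => eSup ν (Ioo a t) u := fun s t hst =>
        eSup_mono_set ν (Ioo_subset_Ioo_right hst) u
      refine le_trans ?_ (le_sSup ⟨_, hmono.measurable.inv, h0, rfl⟩)
      refine hmain.trans ?_
      calc _ = eSup μ (Ioo a b) (fun t => (eSup ν (Ioo a t) u)⁻¹ * w t) / 1 := (div_one _).symm
        _ ≤ _ := ENNReal.div_le_div_left hone _
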